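/- If ω is a Ricci-flat Kähler metric on ℂⁿ (with its standard complex structure) such that A⁻¹ ω_{ℂⁿ} ≤ ω ≤ A ω_{ℂⁿ} on all of ℂⁿ for some constant A > 1, where ω_{ℂⁿ} is the standard Euclidean Kähler form, then ω has constant coefficients, i.e. ω is parallel with respect to the Euclidean metric. -/

import Mathlib

noncomputable section

open Matrix

/-- Complex Euclidean space `ℂⁿ`. -/
abbrev Cn (n : ℕ) := EuclideanSpace ℂ (Fin n)

/-- The `j`-th standard coordinate direction in `ℂⁿ`. -/
def coordDir (n : ℕ) (j : Fin n) : Cn n := EuclideanSpace.single j 1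

/-- The Wirtinger derivative `∂f/∂z_j = (∂f/∂x_j - i ∂f/∂y_j)/2` of `f : ℂⁿ → ℂ`. -/
def wdz {n : ℕ} (j : Fin n) (f : Cn n → ℂ) (x : Cn n) : ℂ :=
  (2 : ℂ)⁻¹ * (fderiv ℝ f x (coordDir n j) - Complex.I * fderiv ℝ f x (Complex.I • coordDir n j))

/-- The conjugate Wirtinger derivative `∂f/∂z̄_j = (∂f/∂x_j + i ∂f/∂y_j)/2` of `f : ℂⁿ → ℂ`. -/
def wdzbar {n : ℕ} (j : Fin n) (f : Cn n → ℂ) (x : Cn n) : ℂ :=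
  (2 : ℂ)⁻¹ * (fderiv ℝ f x (coordDir n j) + Complex.I * fderiv ℝ f x (Complex.I • coordDir n j))

/-- A Kähler metric `ω = i g_{i j̄} dz^i ∧ dz̄^j` on `ℂⁿ` (with its standard complex
structure), given by its matrix of coefficients `g_{i j̄}` in the standard coordinates: a
smooth field of Hermitian matrices satisfying the Kähler symmetry
`∂_{z_k} g_{i j̄} = ∂_{z_i} g_{k j̄}` (equivalent to `dω = 0`). -/
structure KahlerMetricCn (n : ℕ) where
  /-- the coefficients `g_{i j̄}` of the metric -/
  g : Cn n → Matrix (Fin n) (Fin n) ℂ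
  smooth : ∀ i j : Fin n, ContDiff ℝ (⊤ : ℕ∞) (fun x => g x i j)
  hermitian : ∀ x, (g x).IsHermitian
  kahler : ∀ (x : Cn n) (i j k : Fin n), wdz k (fun y => g y i j) x = wdz i (fun y => g y k j) x

/-- The Ricci curvature `Ric_{i j̄} = -∂_{z_i} ∂_{z̄_j} log det g` of a Kähler metric on `ℂⁿ`. -/
def KahlerMetricCn.Ric {n : ℕ} (G : KahlerMetricCn n) (x : Cn n) (i j : Fin n) : ℂ :=
  -(wdz i (fun y => wdzbar j (fun w => Complex.log ((G.g w).det)) y) x)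


section AlgPart

variable {ι R : Type*} [Fintype ι] [DecidableEq ι] [CommRing R] [StarRing R]

/-- Entrywise derivative of a matrix. -/
def dM (D : Derivation ℤ R R) (M : Matrix ι ι R) : Matrix ι ι R := M.map D

omit [DecidableEq ι] [StarRing R] in
lemma dM_mul (D : Derivation ℤ R R) (M N : Matrix ι ι R) :
    dM D (M * N) = dM D M * N + M * dM D N := by
  ext i j
  simp only [dM, Matrix.map_apply, Matrix.mul_apply, Matrix.add_apply, map_sum, Derivation.leibniz,
    smul_eq_mul, ← Finset.sum_add_distrib]
  exact Finset.sum_congr rfl fun k _ => by ring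

omit [Fintype ι] [DecidableEq ι] [StarRing R] in
lemma dM_add (D : Derivation ℤ R R) (M N : Matrix ι ι R) :
    dM D (M + N) = dM D M + dM D N := by
  ext i j; simp [dM]

omit [Fintype ι] [DecidableEq ι] [StarRing R] in
lemma dM_sub (D : Derivation ℤ R R) (M N : Matrix ι ι R) :
    dM D (M - N) = dM D M - dM D N := by
  ext i j; simp [dM]

omit [Fintype ι] [DecidableEq ι] [StarRing R] in
lemma dM_smul (D : Derivation ℤ R R) (a : R) (N : Matrix ι ι R) :
    dM D (a • N) = D a • N + a • dM D N := by
  ext i j; simp [dM]; ring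

omit [Fintype ι] [DecidableEq ι] [StarRing R] in
lemma dM_sum {κ : Type*} (s : Finset κ) (D : Derivation ℤ R R) (f : κ → Matrix ι ι R) :
    dM D (∑ k ∈ s, f k) = ∑ k ∈ s, dM D (f k) := by
  ext i j; simp [dM, Matrix.sum_apply]

omit [Fintype ι] [StarRing R] in
lemma dM_one (D : Derivation ℤ R R) : dM D (1 : Matrix ι ι R) = 0 := by
  ext i j; by_cases h : i = j <;> simp [dM, h]

omit [Fintype ι] [DecidableEq ι] [StarRing R] in
lemma dM_zero (D : Derivation ℤ R R) : dM D (0 : Matrix ι ι R) = 0 := by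
  ext i j; simp [dM]

omit [DecidableEq ι] [StarRing R] in
lemma D_trace (D : Derivation ℤ R R) (M : Matrix ι ι R) : D M.trace = (dM D M).trace := by
  simp [Matrix.trace, dM]

omit [StarRing R] in
lemma D_prod {κ : Type*} [DecidableEq κ] (D : Derivation ℤ R R) (s : Finset κ) (f : κ → R) :
    D (∏ k ∈ s, f k) = ∑ i ∈ s, ∏ k ∈ s, (Function.update f i (D (f i))) k := by
  induction s using Finset.induction_on with
  | empty => simp
  | insert a s ha ih =>
    rw [Finset.prod_insert ha, Derivation.leibniz, ih, Finset.sum_insert ha,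
      Finset.prod_insert ha]
    simp only [Function.update_self, smul_eq_mul]
    rw [Finset.prod_update_of_notMem ha, Finset.mul_sum, add_comm]
    congr 1
    · ring
    · refine Finset.sum_congr rfl fun i hi => ?_
      rw [Finset.prod_insert ha, Function.update_of_ne]
      rintro rfl; exact ha hi

omit [StarRing R] in
lemma D_det (D : Derivation ℤ R R) (M : Matrix ι ι R) :
    D M.det = (dM D M * M.adjugate).trace := by
  have h1 : D M.det = ∑ i, (M.updateRow i (dM D M i)).det := by
    simp only [Matrix.det_apply', map_sum]
    rw [Finset.sum_comm]
    refine Finset.sum_congr rfl fun σ _ => ?_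
    rw [Derivation.leibniz]
    have : D (((Equiv.Perm.sign σ : ℤˣ) : ℤ) : R) = 0 := by
      exact D.map_intCast _
    rw [this, smul_zero, add_zero, D_prod, smul_eq_mul, Finset.mul_sum]
    conv_rhs => rw [← Equiv.sum_comp σ]
    refine Finset.sum_congr rfl fun i _ => ?_
    congr 1
    refine Finset.prod_congr rfl fun k _ => ?_
    by_cases h : k = i
    · subst h; simp [dM]
    · rw [Function.update_of_ne h, Matrix.updateRow_ne]
      simpa using h
  rw [h1]
  simp only [Matrix.trace, Matrix.diag, Matrix.mul_apply]
  refine Finset.sum_congr rfl fun i _ => ?_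
  have := Matrix.cramer_transpose_apply M (dM D M i) i
  rw [← this]
  rw [Matrix.cramer_eq_adjugate_mulVec, ← Matrix.adjugate_transpose, Matrix.mulVec_transpose]
  rfl

/-- The sesquilinear form induced by a metric `H` with inverse `P`. -/
def BB (P H : Matrix ι ι R) (X Y : ι → Matrix ι ι R) : R :=
  ∑ k, ∑ l, P l k * (X k * H * (Y l)ᴴ * P).trace

variable (ι R) in
/-- Algebraic data of a Ricci-flat Kähler metric. -/
structure KD where
  d : ι → Derivation ℤ R R
  e : ι → Derivation ℤ R R
  star_d : ∀ p f, star (d p f) = e p (star f)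
  de : ∀ p q f, d p (e q f) = e q (d p f)
  dd : ∀ p q f, d p (d q f) = d q (d p f)
  H : Matrix ι ι R
  P : Matrix ι ι R
  HP : H * P = 1
  PH : P * H = 1
  herm : Hᴴ = H
  kah : ∀ i j k, d k (H i j) = d i (H k j)
  ric : ∀ p q, e q ((dM (d p) H * P).trace) = 0

namespace KD
variable (K : KD ι R)

/-- Connection matrices -/
def Γ (p : ι) : Matrix ι ι R := dM (K.d p) K.H * K.P

lemma star_e (p : ι) (f : R) : star (K.e p f) = K.d p (star f) := by
  rw [← star_star (K.d p (star f)), K.star_d, star_star]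

lemma hermP : K.Pᴴ = K.P := by
  have h : K.Pᴴ * K.H = 1 := by
    have := congrArg conjTranspose K.HP
    rwa [conjTranspose_mul, K.herm, conjTranspose_one] at this
  calc K.Pᴴ = K.Pᴴ * (K.H * K.P) := by rw [K.HP, mul_one]
    _ = K.P := by rw [← mul_assoc, h, one_mul]

lemma dMd_conj (p : ι) (M : Matrix ι ι R) : (dM (K.d p) M)ᴴ = dM (K.e p) Mᴴ := by
  ext i j; simp [dM, K.star_d]

lemma dMe_conj (p : ι) (M : Matrix ι ι R) : (dM (K.e p) M)ᴴ = dM (K.d p) Mᴴ := by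
  ext i j; simp [dM, K.star_e]

lemma starP (i j : ι) : star (K.P i j) = K.P j i := by
  have := congrFun (congrFun K.hermP j) i
  simpa using this

lemma dH (p : ι) : dM (K.d p) K.H = K.Γ p * K.H := by
  rw [Γ, mul_assoc, K.PH, mul_one]

lemma DP (D : Derivation ℤ R R) : dM D K.P = - (K.P * dM D K.H * K.P) := by
  have h := dM_mul D K.H K.P
  rw [K.HP, dM_one] at h
  have h2 : K.P * (K.H * dM D K.P) = - (K.P * (dM D K.H * K.P)) := by
    rw [← mul_neg, eq_neg_of_add_eq_zero_right h.symm]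
  rw [← mul_assoc, K.PH, one_mul] at h2
  rw [h2, mul_assoc]

lemma dP (p : ι) : dM (K.d p) K.P = - (K.P * K.Γ p) := by
  rw [DP, Γ, mul_assoc]

lemma Γsymm (p i m : ι) : K.Γ p i m = K.Γ i p m := by
  simp only [Γ, dM, Matrix.mul_apply, Matrix.map_apply]
  exact Finset.sum_congr rfl fun j _ => by rw [K.kah i j p]

/-- covariant derivative -/
def nab (p : ι) (X : ι → Matrix ι ι R) (k : ι) : Matrix ι ι R :=
  dM (K.d p) (X k) + X k * K.Γ p - K.Γ p * X k - ∑ m, K.Γ p k m • X m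

/-- inner product -/
def B (X Y : ι → Matrix ι ι R) : R := BB K.P K.H X Y

lemma B_def (X Y : ι → Matrix ι ι R) :
  K.B X Y = ∑ k, ∑ l, K.P l k * (X k * K.H * (Y l)ᴴ * K.P).trace := rfl

lemma star_B (X Y : ι → Matrix ι ι R) : star (K.B X Y) = K.B Y X := by
  rw [B_def, B_def, star_sum, Finset.sum_comm]
  rw [Finset.sum_comm]
  simp_rw [star_sum]
  rw [Finset.sum_comm]
  refine Finset.sum_congr rfl fun k _ => Finset.sum_congr rfl fun l _ => ?_
  rw [star_mul', K.starP, ← Matrix.trace_conjTranspose]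
  congr 1
  simp only [conjTranspose_mul, conjTranspose_conjTranspose, K.herm, K.hermP]
  rw [Matrix.trace_mul_comm]
  simp only [mul_assoc]

lemma B_add_left (X X' Y : ι → Matrix ι ι R) : K.B (X + X') Y = K.B X Y + K.B X' Y := by
  simp only [B_def, Pi.add_apply, add_mul, Matrix.trace_add, mul_add, Finset.sum_add_distrib]

lemma B_smul_left (a : R) (X Y : ι → Matrix ι ι R) : K.B (a • X) Y = a * K.B X Y := by
  simp only [B_def, Pi.smul_apply, Matrix.smul_mul, Matrix.trace_smul, Finset.mul_sum, smul_eq_mul]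
  exact Finset.sum_congr rfl fun k _ => Finset.sum_congr rfl fun l _ => by ring

lemma B_add_right (X Y Y' : ι → Matrix ι ι R) : K.B X (Y + Y') = K.B X Y + K.B X Y' := by
  rw [← K.star_B, B_add_left, star_add, K.star_B, K.star_B]

lemma B_smul_right (a : R) (X Y : ι → Matrix ι ι R) : K.B X (a • Y) = star a * K.B X Y := by
  rw [← K.star_B, B_smul_left, star_mul', K.star_B]

lemma B_zero_left (Y : ι → Matrix ι ι R) : K.B 0 Y = 0 := by
  simp [B_def]

lemma B_zero_right (Y : ι → Matrix ι ι R) : K.B Y 0 = 0 := by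
  simp [B_def]

lemma B_sum_left {κ : Type*} (s : Finset κ) (X : κ → ι → Matrix ι ι R) (Y : ι → Matrix ι ι R) :
    K.B (∑ a ∈ s, X a) Y = ∑ a ∈ s, K.B (X a) Y := by
  classical
  induction s using Finset.induction_on with
  | empty => simp [B_zero_left]
  | insert a s ha ih => rw [Finset.sum_insert ha, Finset.sum_insert ha, B_add_left, ih]

lemma B_sum_right {κ : Type*} (s : Finset κ) (X : κ → ι → Matrix ι ι R) (Y : ι → Matrix ι ι R) :
    K.B Y (∑ a ∈ s, X a) = ∑ a ∈ s, K.B Y (X a) := by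
  rw [← K.star_B, B_sum_left, star_sum]
  simp only [star_B]

/-- Entrywise conjugate derivative of a family. -/
def eF (q : ι) (X : ι → Matrix ι ι R) : ι → Matrix ι ι R := fun k => dM (K.e q) (X k)

lemma d_B (p : ι) (X Y : ι → Matrix ι ι R) :
    K.d p (K.B X Y) = K.B (K.nab p X) Y + K.B X (K.eF p Y) := by
  have hP : ∀ l k, K.d p (K.P l k) = - ∑ m, K.P l m * K.Γ p m k := fun l k => by
    have := congrFun (congrFun (K.dP p) l) k
    simpa [dM, Matrix.mul_apply] using this
  have key : ∀ k l, (dM (K.d p) (X k * K.H * (Y l)ᴴ * K.P)).trace =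
      (dM (K.d p) (X k) * K.H * (Y l)ᴴ * K.P).trace + (X k * K.Γ p * K.H * (Y l)ᴴ * K.P).trace
      - (K.Γ p * X k * K.H * (Y l)ᴴ * K.P).trace
      + (X k * K.H * (K.eF p Y l)ᴴ * K.P).trace := fun k l => by
    have e1 : (K.Γ p * X k * K.H * (Y l)ᴴ * K.P).trace
        = (X k * K.H * (Y l)ᴴ * (K.P * K.Γ p)).trace := by
      simp only [mul_assoc]
      rw [Matrix.trace_mul_comm]
      simp only [mul_assoc]
    rw [e1, eF, K.dMe_conj]
    simp only [dM_mul, K.dH, K.dP, mul_add, mul_neg, Matrix.trace_add, Matrix.trace_neg, mul_assoc]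
    ring
  have lhs : K.d p (K.B X Y) = ∑ k, ∑ l, (K.P l k * (dM (K.d p) (X k * K.H * (Y l)ᴴ * K.P)).trace
      - (∑ m, K.P l m * K.Γ p m k) * (X k * K.H * (Y l)ᴴ * K.P).trace) := by
    simp only [B_def, map_sum, Derivation.leibniz, smul_eq_mul, hP, D_trace]
    exact Finset.sum_congr rfl fun k _ => Finset.sum_congr rfl fun l _ => by ring
  have sw : ∑ k, ∑ l, (∑ m, K.P l m * K.Γ p m k) * (X k * K.H * (Y l)ᴴ * K.P).trace
      = ∑ k, ∑ l, K.P l k * ((∑ m, K.Γ p k m • X m) * K.H * (Y l)ᴴ * K.P).trace := by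
    simp only [Finset.sum_mul, Matrix.smul_mul, Matrix.trace_sum, Matrix.trace_smul,
      Finset.mul_sum, smul_eq_mul]
    rw [Finset.sum_comm]
    conv_rhs => rw [Finset.sum_comm]
    refine Finset.sum_congr rfl fun l _ => ?_
    rw [Finset.sum_comm]
    exact Finset.sum_congr rfl fun k _ => Finset.sum_congr rfl fun m _ => by ring
  rw [lhs]
  simp only [Finset.sum_sub_distrib]
  rw [sw]
  simp only [B_def, ← Finset.sum_sub_distrib, ← Finset.sum_add_distrib]
  refine Finset.sum_congr rfl fun k _ => Finset.sum_congr rfl fun l _ => ?_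
  rw [key]
  simp only [nab, add_mul, sub_mul, Matrix.trace_add, Matrix.trace_sub]
  ring

lemma e_B (p : ι) (X Y : ι → Matrix ι ι R) :
    K.e p (K.B X Y) = K.B (K.eF p X) Y + K.B X (K.nab p Y) := by
  rw [← K.star_B Y X, ← K.star_d, d_B, star_add, star_B, star_B, add_comm]

/-- Curvature. -/
def T (p q : ι) : Matrix ι ι R := dM (K.e q) (K.Γ p)

lemma eH_symm (i j q : ι) : K.e q (K.H i j) = K.e j (K.H i q) := by
  have h : ∀ a b, K.H a b = star (K.H b a) := fun a b => by
    have := congrFun (congrFun K.herm a) b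
    simpa using this.symm
  rw [h i j, h i q, ← K.star_d, ← K.star_d, K.kah]

lemma TH (p q : ι) : K.T p q * K.H =
    dM (K.e q) (dM (K.d p) K.H) - dM (K.d p) K.H * K.P * dM (K.e q) K.H := by
  rw [T, Γ, dM_mul, K.DP, add_mul, mul_neg, neg_mul]
  have : dM (K.d p) K.H * (K.P * dM (K.e q) K.H * K.P) * K.H
    = dM (K.d p) K.H * K.P * dM (K.e q) K.H * (K.P * K.H) := by simp only [mul_assoc]
  rw [this, K.PH, mul_assoc, K.PH, mul_one, mul_one, sub_eq_add_neg]

lemma TH_symm1 (p q i j : ι) : (K.T p q * K.H) i j = (K.T i q * K.H) p j := by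
  rw [TH, TH]
  simp only [Matrix.sub_apply, Matrix.mul_apply, dM, Matrix.map_apply, K.kah i _ p]

lemma TH_symm2 (p q i j : ι) : (K.T p q * K.H) i j = (K.T p j * K.H) i q := by
  rw [TH, TH]
  simp only [Matrix.sub_apply, Matrix.mul_apply, dM, Matrix.map_apply, K.eH_symm _ j q]
  congr 1
  rw [← K.de, ← K.de, K.eH_symm]

lemma ric' (p q : ι) : (K.T p q).trace = 0 := by
  rw [T, ← D_trace]; exact K.ric p q

lemma hym : ∑ p, ∑ q, K.P q p • K.T p q = 0 := by
  have h : (∑ p, ∑ q, K.P q p • K.T p q) * K.H = 0 := by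
    ext i j
    simp only [Finset.sum_mul, Matrix.sum_apply, Matrix.smul_mul, Matrix.smul_apply, smul_eq_mul,
      Matrix.zero_apply]
    have : ∀ p q, (K.T p q * K.H) i j = (K.T i j * K.H) p q := fun p q => by
      rw [TH_symm1, TH_symm2]
    simp only [this]
    have h2 := K.ric' i j
    have h3 : K.T i j = (K.T i j * K.H) * K.P := by rw [mul_assoc, K.HP, mul_one]
    rw [h3] at h2
    simp only [Matrix.trace, Matrix.diag, Matrix.mul_apply (N := K.P)] at h2
    rw [← h2]
    exact Finset.sum_congr rfl fun k _ => Finset.sum_congr rfl fun l _ => by ring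
  have := congrArg (· * K.P) h
  simpa only [mul_assoc, K.HP, mul_one, zero_mul] using this

lemma dMde (p q : ι) (M : Matrix ι ι R) :
    dM (K.d p) (dM (K.e q) M) = dM (K.e q) (dM (K.d p) M) := by
  ext i j; simp [dM, K.de]

lemma bianchi0 (p k : ι) : dM (K.d p) (K.Γ k) + K.Γ k * K.Γ p =
    dM (K.d k) (K.Γ p) + K.Γ p * K.Γ k := by
  have h : dM (K.d p) (dM (K.d k) K.H) = dM (K.d k) (dM (K.d p) K.H) := by
    ext i j; simp only [dM, Matrix.map_apply]; rw [K.dd]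
  have e : ∀ p k, dM (K.d k) K.H * dM (K.d p) K.P = - (K.Γ k * K.Γ p) := fun p k => by
    rw [K.dP, mul_neg, ← mul_assoc]; rfl
  have h1 : ∀ p k, dM (K.d p) (K.Γ k) + K.Γ k * K.Γ p = dM (K.d p) (dM (K.d k) K.H) * K.P := by
    intro p k
    conv_lhs => rw [Γ, dM_mul, e]
    rw [← Γ]; abel
  rw [h1, h1, h]

lemma bianchi (p q k : ι) : K.nab p (K.eF q K.Γ) k = K.nab k (K.eF q K.Γ) p := by
  have h := congrArg (dM (K.e q)) (K.bianchi0 p k)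
  simp only [dM_add, dM_mul, ← K.dMde] at h
  have h2 : ∑ m, K.Γ p k m • K.eF q K.Γ m = ∑ m, K.Γ k p m • K.eF q K.Γ m :=
    Finset.sum_congr rfl fun m _ => by rw [K.Γsymm]
  rw [nab, nab, h2]
  simp only [eF] at h ⊢
  linear_combination (norm := abel) h

lemma trace_nab (k : ι) : ∑ p, ∑ q, K.P q p • K.nab k (K.eF q K.Γ) p = 0 := by
  have h := congrArg (dM (K.d k)) K.hym
  have hP : ∀ l m, K.d k (K.P l m) = - ∑ a, K.P l a * K.Γ k a m := fun l m => by
    have := congrFun (congrFun (K.dP k) l) m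
    simpa [dM, Matrix.mul_apply] using this
  simp only [dM_sum, dM_smul, dM_zero, Finset.sum_add_distrib, hP] at h
  have sw : ∑ p, ∑ q, (- ∑ a, K.P q a * K.Γ k a p) • K.T p q
      = - ∑ p, ∑ q, K.P q p • ∑ m, K.Γ k p m • K.T m q := by
    simp only [neg_smul, Finset.sum_neg_distrib, Finset.sum_smul, Finset.smul_sum, smul_smul]
    congr 1
    rw [Finset.sum_comm]
    conv_rhs => rw [Finset.sum_comm]
    refine Finset.sum_congr rfl fun l _ => ?_
    rw [Finset.sum_comm]
  rw [sw] at h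
  have h1 : ∑ p, ∑ q, K.P q p • (K.T p q * K.Γ k) = 0 := by
    have := congrArg (· * K.Γ k) K.hym
    simpa only [Finset.sum_mul, Matrix.smul_mul, zero_mul] using this
  have h2 : ∑ p, ∑ q, K.P q p • (K.Γ k * K.T p q) = 0 := by
    have := congrArg (K.Γ k * ·) K.hym
    simpa only [Finset.mul_sum, Matrix.mul_smul, mul_zero] using this
  simp only [nab, smul_sub, smul_add, Finset.sum_sub_distrib, Finset.sum_add_distrib]
  have h3 : ∀ q, K.eF q K.Γ = fun p => K.T p q := fun q => rfl
  simp only [h3, h1, h2]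
  linear_combination (norm := abel) h

lemma lap1 (k : ι) : ∑ p, ∑ q, K.P q p • K.nab p (K.eF q K.Γ) k = 0 := by
  rw [← K.trace_nab k]
  exact Finset.sum_congr rfl fun p _ => Finset.sum_congr rfl fun q _ => by rw [K.bianchi]

lemma commu (p q k : ι) : K.eF q (K.nab p K.Γ) k = K.nab p (K.eF q K.Γ) k
    + K.Γ k * K.T p q - K.T p q * K.Γ k - ∑ m, K.T p q k m • K.Γ m := by
  have h : ∀ m, K.e q (K.Γ p k m) = K.T p q k m := fun m => rfl
  simp only [eF, nab, dM_sub, dM_add, dM_mul, dM_sum, dM_smul, ← K.dMde,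
    Finset.sum_add_distrib, h]
  have h' : dM (K.e q) (K.Γ p) = K.T p q := rfl
  rw [h']
  abel

lemma lap2 (k : ι) : ∑ p, ∑ q, K.P q p • K.eF q (K.nab p K.Γ) k = 0 := by
  simp only [commu, smul_sub, smul_add, Finset.sum_sub_distrib, Finset.sum_add_distrib, lap1]
  have h1 : ∑ p, ∑ q, K.P q p • (K.T p q * K.Γ k) = 0 := by
    have := congrArg (· * K.Γ k) K.hym
    simpa only [Finset.sum_mul, Matrix.smul_mul, zero_mul] using this
  have h2 : ∑ p, ∑ q, K.P q p • (K.Γ k * K.T p q) = 0 := by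
    have := congrArg (K.Γ k * ·) K.hym
    simpa only [Finset.mul_sum, Matrix.mul_smul, mul_zero] using this
  have h3 : ∑ p, ∑ q, K.P q p • ∑ m, K.T p q k m • K.Γ m = 0 := by
    simp only [Finset.smul_sum, smul_smul]
    have : ∀ m, ∑ p, ∑ q, K.P q p * K.T p q k m = 0 := fun m => by
      have := congrFun (congrFun K.hym k) m
      simpa only [Matrix.sum_apply, Matrix.smul_apply, smul_eq_mul, Matrix.zero_apply] using this
    have e : ∀ p, ∑ q, ∑ m, (K.P q p * K.T p q k m) • K.Γ m
        = ∑ m, ∑ q, (K.P q p * K.T p q k m) • K.Γ m := fun p => Finset.sum_comm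
    simp only [e]
    rw [Finset.sum_comm]
    refine Finset.sum_eq_zero fun m _ => ?_
    simp only [← Finset.sum_smul, this, zero_smul]
  rw [h1, h2, h3]; simp

/-- Laplacian. -/
def L (f : R) : R := ∑ p, ∑ q, K.P q p * K.d p (K.e q f)

/-- Calabi's quantity. -/
def S : R := K.B K.Γ K.Γ

lemma bochner : K.L K.S = ∑ p, ∑ q, K.P q p * (K.B (K.nab p K.Γ) (K.nab q K.Γ)
    + K.B (K.eF q K.Γ) (K.eF p K.Γ)) := by
  have e : ∀ p q, K.d p (K.e q K.S) = (K.B (K.nab p K.Γ) (K.nab q K.Γ)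
    + K.B (K.eF q K.Γ) (K.eF p K.Γ)) + K.B (K.nab p (K.eF q K.Γ)) K.Γ
    + K.B K.Γ (K.eF p (K.nab q K.Γ)) := fun p q => by
    rw [S, e_B, map_add, d_B, d_B]; ring
  simp only [L, e]
  simp only [mul_add _ (_ + _), Finset.sum_add_distrib]
  have z1 : ∑ p, ∑ q, K.P q p * K.B (K.nab p (K.eF q K.Γ)) K.Γ = 0 := by
    simp only [← B_smul_left, ← B_sum_left]
    have : ∑ p, ∑ q, K.P q p • K.nab p (K.eF q K.Γ) = 0 := by
      funext k
      simpa only [Finset.sum_apply, Pi.smul_apply, Pi.zero_apply] using K.lap1 k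
    rw [this, B_zero_left]
  have z2 : ∑ p, ∑ q, K.P q p * K.B K.Γ (K.eF p (K.nab q K.Γ)) = 0 := by
    have e : ∀ p q, K.P q p * K.B K.Γ (K.eF p (K.nab q K.Γ))
        = K.B K.Γ (K.P p q • K.eF p (K.nab q K.Γ)) := fun p q => by
      rw [B_smul_right, K.starP]
    simp only [e, ← B_sum_right]
    have : ∑ p, ∑ q, K.P p q • K.eF p (K.nab q K.Γ) = 0 := by
      rw [Finset.sum_comm]
      funext k
      simpa only [Finset.sum_apply, Pi.smul_apply, Pi.zero_apply] using K.lap2 k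
    rw [this, B_zero_right]
  rw [z1, z2, add_zero, add_zero]

/-- The two completed squares -/
def X1 (η : R) (p : ι) : ι → Matrix ι ι R := η • K.nab p K.Γ + (2 * K.d p η) • K.Γ
/-- The two completed squares -/
def X2 (η : R) (q : ι) : ι → Matrix ι ι R := η • K.eF q K.Γ + (2 * K.e q η) • K.Γ

lemma cutoff (η : R) (hη : star η = η) : K.L (η * η * K.S) =
    ∑ p, ∑ q, K.P q p * K.B (K.X1 η p) (K.X1 η q) + ∑ p, ∑ q, K.P q p * K.B (K.X2 η q) (K.X2 η p)
    + K.S * (2 * η * K.L η - 6 * ∑ p, ∑ q, K.P q p * (K.d p η * K.e q η)) := by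
  have hb : η * η * K.L K.S = ∑ p, ∑ q, K.P q p * (η * η * (K.B (K.nab p K.Γ) (K.nab q K.Γ)
    + K.B (K.eF q K.Γ) (K.eF p K.Γ))) := by
    rw [bochner]
    simp only [Finset.mul_sum]
    exact Finset.sum_congr rfl fun p _ => Finset.sum_congr rfl fun q _ => by ring
  have hl : K.L (η * η * K.S) = η * η * K.L K.S + ∑ p, ∑ q, K.P q p *
      (K.d p (K.e q (η * η * K.S)) - η * η * K.d p (K.e q K.S)) := by
    simp only [L, Finset.mul_sum, ← Finset.sum_add_distrib]
    exact Finset.sum_congr rfl fun p _ => Finset.sum_congr rfl fun q _ => by ring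
  rw [hl, hb]
  simp only [L, mul_sub, Finset.mul_sum, ← Finset.sum_add_distrib, ← Finset.sum_sub_distrib]
  refine Finset.sum_congr rfl fun p _ => Finset.sum_congr rfl fun q _ => ?_
  have s1 : K.d p K.S = K.B (K.nab p K.Γ) K.Γ + K.B K.Γ (K.eF p K.Γ) := K.d_B _ _ _
  have s2 : K.e q K.S = K.B (K.eF q K.Γ) K.Γ + K.B K.Γ (K.nab q K.Γ) := K.e_B _ _ _
  have s0 : K.B K.Γ K.Γ = K.S := rfl
  have st2 : star (2 : R) = 2 := by simp
  simp only [X1, X2, B_add_left, B_add_right, B_smul_left, B_smul_right, star_mul', star_d, star_e,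
    hη, s0, Derivation.leibniz, smul_eq_mul, map_add, s1, st2]
  generalize K.d p (K.e q K.S) = w
  rw [s2]
  ring

lemma L_trH : K.L K.H.trace = ∑ p, ∑ q, K.P q p *
    (dM (K.d p) K.H * K.P * (dM (K.d q) K.H)ᴴ * 1).trace := by
  have h := congrArg (fun M => (M * K.H).trace) K.hym
  simp only [Finset.sum_mul, Matrix.smul_mul, K.TH, Matrix.trace_sum, Matrix.trace_smul, zero_mul,
    Matrix.trace_zero, Matrix.trace_sub, smul_eq_mul, mul_sub, Finset.sum_sub_distrib] at h
  simp only [L, D_trace, K.dMde, K.dMd_conj, K.herm, mul_one]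
  exact sub_eq_zero.mp h

lemma S_eq : K.S = ∑ p, ∑ q, K.P q p *
    (dM (K.d p) K.H * K.P * (dM (K.d q) K.H)ᴴ * K.P).trace := by
  rw [S, B_def]
  refine Finset.sum_congr rfl fun p _ => Finset.sum_congr rfl fun q _ => ?_
  congr 2
  have : K.P * K.H * K.P = K.P := by rw [K.PH, one_mul]
  rw [Γ, Γ, conjTranspose_mul, K.hermP, mul_assoc _ K.P K.H, K.PH, mul_one]
  simp only [mul_assoc]

end KD
end AlgPart

section SmoothPart

open scoped ContDiff

/-- The star algebra of smooth functions. -/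
def SA (n : ℕ) : StarSubalgebra ℂ (Cn n → ℂ) where
  carrier := {f | ContDiff ℝ ∞ f}
  mul_mem' := fun {a b} ha hb => by
    have h1 : ContDiff ℝ ∞ a := ha
    have h2 : ContDiff ℝ ∞ b := hb
    have h3 : ContDiff ℝ ∞ (a * b) := ContDiff.mul h1 h2
    exact h3
  add_mem' := fun {a b} ha hb => by
    have h1 : ContDiff ℝ ∞ a := ha
    have h2 : ContDiff ℝ ∞ b := hb
    have h3 : ContDiff ℝ ∞ (a + b) := ContDiff.add h1 h2
    exact h3
  algebraMap_mem' := fun c => by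
    have h3 : ContDiff ℝ ∞ (fun _ : Cn n => c) := contDiff_const
    exact h3
  star_mem' := fun {a} ha => by
    have : star a = fun x => Complex.conjCLE (a x) := by funext x; simp
    rw [Set.mem_ofPred_eq, this]
    exact Complex.conjCLE.contDiff.comp ha

variable {n : ℕ}

lemma SA_smooth (f : SA n) : ContDiff ℝ ∞ (f : Cn n → ℂ) := f.2

lemma SA_diff (f : SA n) : Differentiable ℝ (f : Cn n → ℂ) :=
  (SA_smooth f).differentiable (by simp)

lemma SA_dsmooth (v : Cn n) (f : SA n) : ContDiff ℝ ∞ (fun x => fderiv ℝ (f : Cn n → ℂ) x v) :=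
  ((SA_smooth f).fderiv_right (m := ∞) (by simp)).clm_apply contDiff_const

/-- Directional derivative -/
def Dv (v : Cn n) : Derivation ℂ (SA n) (SA n) :=
  Derivation.mk'
    { toFun := fun f => ⟨fun x => fderiv ℝ (f : Cn n → ℂ) x v, SA_dsmooth v f⟩
      map_add' := fun f g => by
        apply Subtype.ext; funext x
        change fderiv ℝ ((f : Cn n → ℂ) + (g : Cn n → ℂ)) x v = _
        rw [fderiv_add (SA_diff f x) (SA_diff g x)]; rfl
      map_smul' := fun c f => by
        apply Subtype.ext; funext x
        change fderiv ℝ (c • (f : Cn n → ℂ)) x v = _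
        rw [fderiv_const_smul (SA_diff f x)]; rfl }
    (fun f g => by
        apply Subtype.ext; funext x
        change fderiv ℝ ((f : Cn n → ℂ) * (g : Cn n → ℂ)) x v = _
        rw [fderiv_mul (SA_diff f x) (SA_diff g x)]
        rfl)

lemma Dv_apply (v : Cn n) (f : SA n) (x : Cn n) :
    (Dv v f : Cn n → ℂ) x = fderiv ℝ (f : Cn n → ℂ) x v := rfl

lemma Dv_comm (v w : Cn n) (f : SA n) : Dv v (Dv w f) = Dv w (Dv v f) := by
  apply Subtype.ext; funext x
  have h2 : ContDiffAt ℝ ∞ (f : Cn n → ℂ) x := (SA_smooth f).contDiffAt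
  have hs : IsSymmSndFDerivAt ℝ (f : Cn n → ℂ) x := h2.isSymmSndFDerivAt (by simpa using ENat.LEInfty.out)
  have hd : DifferentiableAt ℝ (fderiv ℝ (f : Cn n → ℂ)) x :=
    (((SA_smooth f).fderiv_right (m := ∞) (by simp)).differentiable (by simp)) x
  have key : ∀ a b : Cn n, (Dv a (Dv b f) : Cn n → ℂ) x =
      fderiv ℝ (fderiv ℝ (f : Cn n → ℂ)) x a b := fun a b => by
    rw [Dv_apply]
    change fderiv ℝ (fun y => fderiv ℝ (f : Cn n → ℂ) y b) x a = _
    rw [fderiv_clm_apply hd (by fun_prop)]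
    simp
  rw [key, key, hs.eq]

lemma Dv_star (v : Cn n) (f : SA n) : star (Dv v f) = Dv v (star f) := by
  apply Subtype.ext; funext x
  change star (fderiv ℝ (f : Cn n → ℂ) x v) = fderiv ℝ (fun y => Complex.conjCLE ((f : Cn n → ℂ) y)) x v
  have := (Complex.conjCLE.toContinuousLinearMap.hasFDerivAt.comp x (SA_diff f x).hasFDerivAt).fderiv
  change fderiv ℝ (fun y => Complex.conjCLE ((f : Cn n → ℂ) y)) x = _ at this
  rw [this]; simp

lemma Dv_csmul (v : Cn n) (c : ℂ) (f : SA n) : Dv v (c • f) = c • Dv v f := (Dv v).map_smul c f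

lemma Dv_add (v w : Cn n) (f : SA n) : Dv (v + w) f = Dv v f + Dv w f := by
  apply Subtype.ext; funext x
  exact map_add (fderiv ℝ (f : Cn n → ℂ) x) v w

lemma Dv_rsmul (a : ℝ) (v : Cn n) (f : SA n) : Dv (a • v) f = (a : ℂ) • Dv v f := by
  apply Subtype.ext; funext x
  change fderiv ℝ (f : Cn n → ℂ) x (a • v) = (a : ℂ) * fderiv ℝ (f : Cn n → ℂ) x v
  rw [map_smul]; simp

lemma Dv_zero (f : SA n) : Dv 0 f = 0 := by
  apply Subtype.ext; funext x
  exact map_zero (fderiv ℝ (f : Cn n → ℂ) x)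

lemma Dv_sum {κ : Type*} (s : Finset κ) (v : κ → Cn n) (f : SA n) :
    Dv (∑ i ∈ s, v i) f = ∑ i ∈ s, Dv (v i) f := by
  classical
  induction s using Finset.induction_on with
  | empty => simp [Dv_zero]
  | insert a s ha ih => rw [Finset.sum_insert ha, Finset.sum_insert ha, Dv_add, ih]

/-- `∂_j` -/
def dzC (j : Fin n) : Derivation ℂ (SA n) (SA n) :=
  (2⁻¹ : ℂ) • (Dv (coordDir n j) - Complex.I • Dv (Complex.I • coordDir n j))
/-- `∂̄_j` -/
def dbC (j : Fin n) : Derivation ℂ (SA n) (SA n) :=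
  (2⁻¹ : ℂ) • (Dv (coordDir n j) + Complex.I • Dv (Complex.I • coordDir n j))

lemma dzC_apply (j : Fin n) (f : SA n) : dzC j f =
  (2⁻¹ : ℂ) • (Dv (coordDir n j) f - Complex.I • Dv (Complex.I • coordDir n j) f) := rfl
lemma dbC_apply (j : Fin n) (f : SA n) : dbC j f =
  (2⁻¹ : ℂ) • (Dv (coordDir n j) f + Complex.I • Dv (Complex.I • coordDir n j) f) := rfl

lemma dzC_coe (j : Fin n) (f : SA n) : (dzC j f : Cn n → ℂ) = wdz j f := rfl
lemma dbC_coe (j : Fin n) (f : SA n) : (dbC j f : Cn n → ℂ) = wdzbar j f := rfl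

/-- `∂_j` -/
def dz (j : Fin n) : Derivation ℤ (SA n) (SA n) := (dzC j).restrictScalars ℤ
/-- `∂̄_j` -/
def db (j : Fin n) : Derivation ℤ (SA n) (SA n) := (dbC j).restrictScalars ℤ

lemma dz_eq (j : Fin n) (f : SA n) : dz j f = dzC j f := rfl
lemma db_eq (j : Fin n) (f : SA n) : db j f = dbC j f := rfl

lemma dz_star (j : Fin n) (f : SA n) : star (dz j f) = db j (star f) := by
  rw [dz_eq, db_eq, dzC_apply, dbC_apply]
  simp [Dv_star, sub_eq_add_neg]

lemma dz_db (p q : Fin n) (f : SA n) : dz p (db q f) = db q (dz p f) := by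
  simp only [dz_eq, db_eq, dzC_apply, dbC_apply, Dv_csmul, map_add, map_sub, smul_add, smul_sub,
    smul_smul]
  rw [Dv_comm (coordDir n p), Dv_comm (Complex.I • coordDir n p), Dv_comm (coordDir n p),
    Dv_comm (Complex.I • coordDir n p)]
  module

lemma dz_dz (p q : Fin n) (f : SA n) : dz p (dz q f) = dz q (dz p f) := by
  simp only [dz_eq, db_eq, dzC_apply, dbC_apply, Dv_csmul, map_add, map_sub, smul_add, smul_sub,
    smul_smul]
  rw [Dv_comm (coordDir n p), Dv_comm (Complex.I • coordDir n p), Dv_comm (coordDir n p),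
    Dv_comm (Complex.I • coordDir n p)]
  module

lemma sum_coord (w : Fin n → ℂ) (f : SA n) (w' : Cn n) (hw : w' = ∑ p, w p • coordDir n p) :
    ∑ p, w p • dz p f = (2⁻¹ : ℂ) • (Dv w' f - Complex.I • Dv (Complex.I • w') f) := by
  subst hw
  have e1 : ∀ p, Dv (w p • coordDir n p) f = ((w p).re : ℂ) • Dv (coordDir n p) f
      + ((w p).im : ℂ) • Dv (Complex.I • coordDir n p) f := fun p => by
    rw [← Dv_rsmul, ← Dv_rsmul, ← Dv_add]
    congr 2
    conv_lhs => rw [← Complex.re_add_im (w p)]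
    rw [add_smul, mul_smul]; simp [Complex.coe_smul]
  have e2 : ∀ p, Dv (Complex.I • w p • coordDir n p) f =
      ((w p).re : ℂ) • Dv (Complex.I • coordDir n p) f
      - ((w p).im : ℂ) • Dv (coordDir n p) f := fun p => by
    rw [sub_eq_add_neg, ← neg_smul, ← Complex.ofReal_neg, ← Dv_rsmul, ← Dv_rsmul, ← Dv_add]
    congr 2
    conv_lhs => rw [← Complex.re_add_im (w p)]
    rw [add_smul, mul_smul, smul_add, smul_comm Complex.I, smul_comm Complex.I, smul_smul Complex.I]
    simp [Complex.coe_smul]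
  rw [Finset.smul_sum, Dv_sum, Dv_sum, Finset.smul_sum, ← Finset.sum_sub_distrib, Finset.smul_sum]
  refine Finset.sum_congr rfl fun p _ => ?_
  rw [e1, e2, dz_eq, dzC_apply]
  have hI : Complex.I * Complex.I = -1 := Complex.I_mul_I
  conv_lhs => rw [← Complex.re_add_im (w p)]
  match_scalars <;> ring_nf <;> simp [Complex.I_sq] <;> ring

lemma sum_coord_bar (w : Fin n → ℂ) (f : SA n) (w' : Cn n) (hw : w' = ∑ p, w p • coordDir n p) :
    ∑ p, star (w p) • db p f = (2⁻¹ : ℂ) • (Dv w' f + Complex.I • Dv (Complex.I • w') f) := by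
  have h := congrArg star (sum_coord w (star f) w' hw)
  simpa [star_sum, dz_star, Dv_star, sub_eq_add_neg] using h

end SmoothPart

section PosPart

open scoped ComplexOrder

variable {n : ℕ}

open scoped MatrixOrder in
lemma exists_sq {M : Matrix (Fin n) (Fin n) ℂ} (hM : M.PosSemidef) : ∃ C : Matrix (Fin n) (Fin n) ℂ,
    M = Cᴴ * C :=
  CStarAlgebra.nonneg_iff_eq_star_mul_self.mp hM.nonneg

lemma trace_mul_psd {M N : Matrix (Fin n) (Fin n) ℂ} (hM : M.PosSemidef) (hN : N.PosSemidef) :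
    0 ≤ (M * N).trace := by
  obtain ⟨C, rfl⟩ := exists_sq hN
  have : (M * (Cᴴ * C)).trace = (C * M * Cᴴ).trace := by
    rw [← mul_assoc, Matrix.trace_mul_comm, mul_assoc]
  rw [this]
  exact (hM.mul_mul_conjTranspose_same C).trace_nonneg

lemma psd_form {Q : Matrix (Fin n) (Fin n) ℂ} (hQ : Q.PosSemidef) (F : Fin n → Fin n → ℂ)
    (hF : ∀ c : Fin n → ℂ, 0 ≤ ∑ p, ∑ q, c p * star (c q) * F p q) :
    0 ≤ ∑ p, ∑ q, Q q p * F p q := by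
  obtain ⟨C, rfl⟩ := exists_sq hQ
  have : ∑ p, ∑ q, (Cᴴ * C) q p * F p q = ∑ a, ∑ p, ∑ q, C a p * star (C a q) * F p q := by
    conv_rhs => rw [Finset.sum_comm]
    refine Finset.sum_congr rfl fun p _ => ?_
    conv_rhs => rw [Finset.sum_comm]
    refine Finset.sum_congr rfl fun q _ => ?_
    rw [Matrix.mul_apply, Finset.sum_mul]
    exact Finset.sum_congr rfl fun a _ => by rw [Matrix.conjTranspose_apply]; ring
  rw [this]
  exact Finset.sum_nonneg fun a _ => hF _

/-- basic Hermitian form -/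
def qf (Q M N : Matrix (Fin n) (Fin n) ℂ) (X : Fin n → Matrix (Fin n) (Fin n) ℂ) : ℂ :=
  ∑ p, ∑ q, Q q p * (X p * M * (X q)ᴴ * N).trace

lemma qf_nonneg {Q M N : Matrix (Fin n) (Fin n) ℂ} (hQ : Q.PosSemidef) (hM : M.PosSemidef)
    (hN : N.PosSemidef) (X : Fin n → Matrix (Fin n) (Fin n) ℂ) : 0 ≤ qf Q M N X := by
  refine psd_form hQ _ fun c => ?_
  have : ∑ p, ∑ q, c p * star (c q) * (X p * M * (X q)ᴴ * N).trace
      = ((∑ p, c p • X p) * M * (∑ q, c q • X q)ᴴ * N).trace := by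
    simp only [Matrix.conjTranspose_sum, Matrix.conjTranspose_smul, Finset.sum_mul, Finset.mul_sum,
      Matrix.trace_sum, Matrix.smul_mul, Matrix.mul_smul, Matrix.trace_smul, smul_eq_mul]
    rw [Finset.sum_comm]
    exact Finset.sum_congr rfl fun a _ => Finset.sum_congr rfl fun b _ => by ring
  rw [this]
  exact trace_mul_psd (hM.mul_mul_conjTranspose_same _) hN

lemma qf_sub1 (Q Q' M N : Matrix (Fin n) (Fin n) ℂ) (X : Fin n → Matrix (Fin n) (Fin n) ℂ) :
    qf (Q - Q') M N X = qf Q M N X - qf Q' M N X := by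
  simp only [qf, Matrix.sub_apply, sub_mul, Finset.sum_sub_distrib]
lemma qf_sub2 (Q M M' N : Matrix (Fin n) (Fin n) ℂ) (X : Fin n → Matrix (Fin n) (Fin n) ℂ) :
    qf Q (M - M') N X = qf Q M N X - qf Q M' N X := by
  simp only [qf, mul_sub, sub_mul, Matrix.trace_sub, Finset.sum_sub_distrib]
lemma qf_sub3 (Q M N N' : Matrix (Fin n) (Fin n) ℂ) (X : Fin n → Matrix (Fin n) (Fin n) ℂ) :
    qf Q M (N - N') X = qf Q M N X - qf Q M N' X := by
  simp only [qf, mul_sub, Matrix.trace_sub, Finset.sum_sub_distrib]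

lemma BB_psd {P H Q : Matrix (Fin n) (Fin n) ℂ} (hP : P.PosSemidef) (hH : H.PosSemidef)
    (hQ : Q.PosSemidef) (X : Fin n → Fin n → Matrix (Fin n) (Fin n) ℂ) :
    0 ≤ ∑ p, ∑ q, Q q p * BB P H (X p) (X q) := by
  refine psd_form hQ _ fun c => ?_
  have : ∑ p, ∑ q, c p * star (c q) * BB P H (X p) (X q)
      = qf P H P (fun k => ∑ p, c p • X p k) := by
    simp only [qf, BB, Matrix.conjTranspose_sum, Matrix.conjTranspose_smul, Finset.sum_mul,
      Finset.mul_sum,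
      Matrix.trace_sum, Matrix.smul_mul, Matrix.mul_smul, Matrix.trace_smul, smul_eq_mul]
    have e : ∀ f : Fin n → Fin n → Fin n → Fin n → ℂ,
        ∑ p, ∑ q, ∑ k, ∑ l, f p q k l = ∑ k, ∑ l, ∑ q, ∑ p, f p q k l := fun f => by
      calc ∑ p, ∑ q, ∑ k, ∑ l, f p q k l = ∑ p, ∑ k, ∑ q, ∑ l, f p q k l :=
            Finset.sum_congr rfl fun p _ => Finset.sum_comm
        _ = ∑ k, ∑ p, ∑ q, ∑ l, f p q k l := Finset.sum_comm
        _ = ∑ k, ∑ p, ∑ l, ∑ q, f p q k l :=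
            Finset.sum_congr rfl fun k _ => Finset.sum_congr rfl fun p _ => Finset.sum_comm
        _ = ∑ k, ∑ l, ∑ p, ∑ q, f p q k l :=
            Finset.sum_congr rfl fun k _ => Finset.sum_comm
        _ = ∑ k, ∑ l, ∑ q, ∑ p, f p q k l :=
            Finset.sum_congr rfl fun k _ => Finset.sum_congr rfl fun l _ => Finset.sum_comm
    rw [e]
    exact Finset.sum_congr rfl fun a _ => Finset.sum_congr rfl fun b _ =>
      Finset.sum_congr rfl fun c _ => Finset.sum_congr rfl fun d _ => by ring
  rw [this]
  exact qf_nonneg hP hH hP _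

lemma BB_psd' {P H Q : Matrix (Fin n) (Fin n) ℂ} (hP : P.PosSemidef) (hH : H.PosSemidef)
    (hQ : Q.PosSemidef) (X : Fin n → Fin n → Matrix (Fin n) (Fin n) ℂ) :
    0 ≤ ∑ p, ∑ q, Q q p * BB P H (X q) (X p) := by
  rw [Finset.sum_comm]
  exact BB_psd hP hH hQ.transpose X

lemma inv_upper {M P : Matrix (Fin n) (Fin n) ℂ} {a : ℝ} (ha : 0 < a) (hP : Pᴴ = P) (hMP : M * P = 1)
    (h : (M - (a : ℂ) • 1).PosSemidef) : (((a⁻¹ : ℝ) : ℂ) • 1 - P).PosSemidef := by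
  have hPM : P * M = 1 := mul_eq_one_comm.mp hMP
  have h1 := h.mul_mul_conjTranspose_same P
  have h2 : (((a⁻¹ : ℝ) : ℂ) • 1 - P)ᴴ = ((a⁻¹ : ℝ) : ℂ) • 1 - P := by
    rw [conjTranspose_sub, hP, conjTranspose_smul]; simp
  have h3 := (Matrix.posSemidef_self_mul_conjTranspose (((a⁻¹ : ℝ) : ℂ) • 1 - P)).smul
    (a := (a : ℂ)) (by exact_mod_cast ha.le)
  have := h1.add h3
  rw [h2, hP] at this
  convert this using 1
  have ha' : (a : ℂ) ≠ 0 := by exact_mod_cast ha.ne'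
  simp only [mul_sub, sub_mul, hPM, mul_one, one_mul, Matrix.mul_smul, Matrix.smul_mul, smul_sub,
    smul_smul, Complex.ofReal_inv]
  match_scalars <;> field_simp <;> ring

lemma inv_lower {M P : Matrix (Fin n) (Fin n) ℂ} {b : ℝ} (hb : 0 < b) (hM : Mᴴ = M)
    (hMP : M * P = 1) (hP : P.PosSemidef)
    (h : ((b : ℂ) • 1 - M).PosSemidef) : (P - ((b⁻¹ : ℝ) : ℂ) • 1).PosSemidef := by
  have hPM : P * M = 1 := mul_eq_one_comm.mp hMP
  have h1 := hP.mul_mul_conjTranspose_same ((b : ℂ) • 1 - M)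
  have h2 : ((b : ℂ) • 1 - M)ᴴ = (b : ℂ) • 1 - M := by
    rw [conjTranspose_sub, hM, conjTranspose_smul]; simp
  have := (h1.add h).smul (a := ((b⁻¹ * b⁻¹ : ℝ) : ℂ)) (by exact_mod_cast (by positivity))
  rw [h2] at this
  convert this using 1
  have ha' : (b : ℂ) ≠ 0 := by exact_mod_cast hb.ne'
  simp only [mul_sub, sub_mul, hPM, hMP, mul_one, one_mul, Matrix.mul_smul, Matrix.smul_mul, smul_sub,
    smul_add, smul_smul, Complex.ofReal_inv, Complex.ofReal_mul]
  match_scalars <;> field_simp <;> ring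

lemma qf_zero {P : Matrix (Fin n) (Fin n) ℂ} {a : ℝ} (ha : 0 < a)
    (hP : P.PosSemidef) (h : (P - (a : ℂ) • 1).PosSemidef) (X : Fin n → Matrix (Fin n) (Fin n) ℂ)
    (h0 : qf P P P X ≤ 0) (p : Fin n) : X p = 0 := by
  have h1 : ((a : ℂ) • (1 : Matrix (Fin n) (Fin n) ℂ)).PosSemidef :=
    Matrix.PosSemidef.one.smul (by exact_mod_cast ha.le)
  have e1 := qf_nonneg hP hP h X
  have e2 := qf_nonneg hP h h1 X
  have e3 := qf_nonneg h h1 h1 X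
  rw [qf_sub3] at e1
  rw [qf_sub2] at e2
  rw [qf_sub1] at e3
  have e4 : qf ((a : ℂ) • 1) ((a : ℂ) • 1) ((a : ℂ) • 1) X ≤ 0 := by
    have := add_nonneg (add_nonneg e1 e2) e3
    have h5 : 0 ≤ qf P P P X - qf ((a : ℂ) • 1) ((a : ℂ) • 1) ((a : ℂ) • 1) X := by
      convert this using 1; ring
    exact (sub_nonneg.mp h5).trans h0
  have e5 : qf ((a : ℂ) • 1) ((a : ℂ) • 1) ((a : ℂ) • 1) X
      = ((a ^ 3 : ℝ) : ℂ) * ∑ p, (X p * (X p)ᴴ).trace := by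
    simp only [qf, Matrix.smul_apply, Matrix.one_apply, smul_eq_mul, mul_ite, mul_one, mul_zero,
      ite_mul, zero_mul, Finset.sum_ite_eq', Finset.sum_ite_eq, Finset.mem_univ, if_true,
      Matrix.mul_smul, Matrix.smul_mul, Matrix.trace_smul, Finset.mul_sum]
    exact Finset.sum_congr rfl fun a _ => by push_cast; ring
  rw [e5] at e4
  have nn : ∀ p, 0 ≤ (X p * (X p)ᴴ).trace := fun p =>
    (Matrix.posSemidef_self_mul_conjTranspose (X p)).trace_nonneg
  have e6 : ∑ p, (X p * (X p)ᴴ).trace = 0 := by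
    refine le_antisymm ?_ (Finset.sum_nonneg fun p _ => nn p)
    have h7 : (0 : ℂ) < ((a ^ 3 : ℝ) : ℂ) := by exact_mod_cast (by positivity)
    have := mul_le_mul_of_nonneg_left e4 (inv_nonneg.mpr h7.le)
    rwa [← mul_assoc, inv_mul_cancel₀ h7.ne', one_mul, mul_zero] at this
  have := (Finset.sum_eq_zero_iff_of_nonneg (fun p _ => nn p)).mp e6 p (Finset.mem_univ _)
  exact Matrix.trace_mul_conjTranspose_self_eq_zero_iff.mp this

end PosPart

section MaxPart

open scoped ComplexOrder ContDiff

variable {n : ℕ}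

/-- Evaluation at a point. -/
def ev (x : Cn n) : SA n →+* ℂ where
  toFun f := (f : Cn n → ℂ) x
  map_one' := rfl
  map_mul' _ _ := rfl
  map_zero' := rfl
  map_add' _ _ := rfl

lemma ev_apply (x : Cn n) (f : SA n) : ev x f = (f : Cn n → ℂ) x := rfl
lemma ev_star (x : Cn n) (f : SA n) : ev x (star f) = star (ev x f) := rfl
lemma ev_smul (x : Cn n) (c : ℂ) (f : SA n) : ev x (c • f) = c * ev x f := rfl

lemma second_deriv_le {φ φ' : ℝ → ℝ} {m : ℝ} (h1 : ∀ t, HasDerivAt φ (φ' t) t)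
    (h2 : HasDerivAt φ' m 0) (hmax : IsLocalMax φ 0) : m ≤ 0 := by
  by_contra hm
  push Not at hm
  have e : deriv φ = φ' := funext fun t => (h1 t).deriv
  have hd : deriv φ 0 = 0 := hmax.deriv_eq_zero
  have hmin : IsLocalMin φ 0 := isLocalMin_of_deriv_deriv_pos (by rw [e, h2.deriv]; exact hm) hd
    (h1 0).continuousAt
  have hc : φ =ᶠ[nhds 0] fun _ => φ 0 := by
    filter_upwards [hmax, hmin] with t a b using le_antisymm a b
  have h3 : deriv φ =ᶠ[nhds 0] fun _ => 0 := by
    have := hc.deriv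
    simpa using this
  rw [e] at h3
  have h4 := h3.deriv_eq
  rw [h2.deriv] at h4
  simp at h4
  linarith

lemma Dv_line (U : SA n) (x v : Cn n) (t : ℝ) :
    HasDerivAt (fun s : ℝ => (ev (x + s • v) U).re) (ev (x + t • v) (Dv v U)).re t := by
  have h1 : HasDerivAt (fun s : ℝ => x + s • v) v t := by
    simpa using ((hasDerivAt_id t).smul_const v).const_add x
  have h2 := (SA_diff U (x + t • v)).hasFDerivAt.comp_hasDerivAt t h1
  exact (Complex.reCLM.hasFDerivAt.comp_hasDerivAt t h2)

lemma DvDv_le (U : SA n) (hU : star U = U) (x v : Cn n)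
    (hmax : IsLocalMax (fun y => (ev y U).re) x) : ev x (Dv v (Dv v U)) ≤ 0 := by
  have h := second_deriv_le (φ := fun s : ℝ => (ev (x + s • v) U).re) (Dv_line U x v)
    (Dv_line (Dv v U) x v 0) ?_
  · rw [Complex.le_def]
    simp only [zero_smul, add_zero] at h
    refine ⟨h, ?_⟩
    have : star (Dv v (Dv v U)) = Dv v (Dv v U) := by rw [Dv_star, Dv_star, hU]
    have h2 := congrArg (ev x) this
    rw [ev_star] at h2
    exact Complex.conj_eq_iff_im.mp h2
  · have hc : Filter.Tendsto (fun s : ℝ => x + s • v) (nhds 0) (nhds x) := by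
      have : Continuous (fun s : ℝ => x + s • v) := by fun_prop
      simpa using this.tendsto 0
    have := hc.eventually hmax
    filter_upwards [this] with t ht
    simpa using ht

lemma lap_max_le (U : SA n) (hU : star U = U) (x : Cn n)
    (hmax : IsLocalMax (fun y => (ev y U).re) x) {Q : Matrix (Fin n) (Fin n) ℂ}
    (hQ : Q.PosSemidef) : ∑ p, ∑ q, Q q p * ev x (dz p (db q U)) ≤ 0 := by
  have := psd_form hQ (fun p q => - ev x (dz p (db q U))) (fun c => ?_)
  · simp only [mul_neg, Finset.sum_neg_distrib] at this
    exact neg_nonneg.mp this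
  · set w : Cn n := ∑ p, c p • coordDir n p with hw
    have key : ∑ p, ∑ q, (c p * star (c q)) • dz p (db q U) =
        (4⁻¹ : ℂ) • (Dv w (Dv w U) + Dv (Complex.I • w) (Dv (Complex.I • w) U)) := by
      have e1 : ∀ p, ∑ q, (c p * star (c q)) • dz p (db q U) =
          c p • dz p (∑ q, star (c q) • db q U) := fun p => by
        rw [map_sum, Finset.smul_sum]
        refine Finset.sum_congr rfl fun q _ => ?_
        rw [mul_smul, dz_eq, dz_eq, (dzC p).map_smul]
      simp only [e1]
      rw [sum_coord c _ w hw, sum_coord_bar c _ w hw]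
      simp only [map_add, Dv_csmul, smul_add]
      rw [Dv_comm w (Complex.I • w)]
      match_scalars <;> ring_nf <;> simp [Complex.I_sq] <;> ring
    have key2 := congrArg (ev x) key
    simp only [map_sum, ev_smul, map_add] at key2
    simp only [mul_neg, Finset.sum_neg_distrib]
    rw [key2, neg_nonneg]
    have a1 := DvDv_le U hU x w hmax
    have a2 := DvDv_le U hU x (Complex.I • w) hmax
    have h4 : (0 : ℂ) ≤ 4⁻¹ := by
      rw [show (4⁻¹ : ℂ) = ((4⁻¹ : ℝ) : ℂ) by push_cast; rfl]
      exact_mod_cast (by positivity)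
    exact mul_nonpos_of_nonneg_of_nonpos h4 (add_nonpos a1 a2)

end MaxPart

section BuildPart

open scoped ComplexOrder ContDiff

variable {n : ℕ}

/-- The metric as a matrix of smooth functions. -/
def Hm (G : KahlerMetricCn n) : Matrix (Fin n) (Fin n) (SA n) :=
  Matrix.of fun i j => ⟨fun x => G.g x i j, G.smooth i j⟩

lemma ev_Hm (G : KahlerMetricCn n) (x : Cn n) : (Hm G).map (ev x) = G.g x := rfl

lemma ev_det (G : KahlerMetricCn n) (x : Cn n) : ev x (Hm G).det = (G.g x).det := by
  rw [RingHom.map_det]; rfl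

lemma quad_eq (M : Matrix (Fin n) (Fin n) ℂ) (v : Fin n → ℂ) :
    star v ⬝ᵥ (M *ᵥ v) = ∑ i, ∑ j, starRingEnd ℂ (v i) * M i j * v j := by
  simp only [dotProduct, Matrix.mulVec, Finset.mul_sum, Pi.star_apply]
  exact Finset.sum_congr rfl fun i _ => Finset.sum_congr rfl fun j _ => by
    rw [mul_assoc]; rfl

lemma quad_one (a : ℝ) (v : Fin n → ℂ) :
    star v ⬝ᵥ (((a : ℂ) • (1 : Matrix (Fin n) (Fin n) ℂ)) *ᵥ v)
      = ((a * ∑ i, Complex.normSq (v i) : ℝ) : ℂ) := by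
  rw [Matrix.smul_mulVec, Matrix.one_mulVec, dotProduct_smul]
  simp only [dotProduct, Pi.star_apply, smul_eq_mul, Complex.ofReal_mul, Complex.ofReal_sum]
  congr 1
  refine Finset.sum_congr rfl fun i _ => ?_
  rw [Complex.normSq_eq_conj_mul_self]; rfl

lemma herm_smul_one (a : ℝ) : ((a : ℂ) • (1 : Matrix (Fin n) (Fin n) ℂ)).IsHermitian := by
  rw [Matrix.IsHermitian, conjTranspose_smul]; simp

lemma quad_real {M : Matrix (Fin n) (Fin n) ℂ} (hM : M.IsHermitian) (v : Fin n → ℂ) :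
    (star v ⬝ᵥ (M *ᵥ v)).im = 0 := by
  have : star (star v ⬝ᵥ (M *ᵥ v)) = star v ⬝ᵥ (M *ᵥ v) := by
    rw [← Matrix.star_dotProduct, Matrix.star_mulVec, hM.eq, Matrix.dotProduct_mulVec]
  exact Complex.conj_eq_iff_im.mp this

lemma psd_of_re {M : Matrix (Fin n) (Fin n) ℂ} (hM : M.IsHermitian)
    (h : ∀ v : Fin n → ℂ, 0 ≤ (star v ⬝ᵥ (M *ᵥ v)).re) : M.PosSemidef := by
  refine Matrix.PosSemidef.of_dotProduct_mulVec_nonneg hM fun v => ?_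
  rw [Complex.le_def]
  exact ⟨h v, (quad_real hM v).symm⟩

variable (G : KahlerMetricCn n) (A : ℝ)

/-- The bound hypothesis. -/
def HB : Prop := ∀ (x : Cn n) (v : Fin n → ℂ),
      A⁻¹ * (∑ i, Complex.normSq (v i)) ≤ (∑ i, ∑ j, starRingEnd ℂ (v i) * G.g x i j * v j).re ∧
      (∑ i, ∑ j, starRingEnd ℂ (v i) * G.g x i j * v j).re ≤ A * (∑ i, Complex.normSq (v i))

variable {G A}

lemma g_lower (hb : HB G A) (x : Cn n) : (G.g x - ((A⁻¹ : ℝ) : ℂ) • 1).PosSemidef := by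
  refine psd_of_re ((G.hermitian x).sub (herm_smul_one _)) fun v => ?_
  rw [Matrix.sub_mulVec, dotProduct_sub, quad_one, quad_eq, Complex.sub_re, Complex.ofReal_re]
  linarith [(hb x v).1]

lemma g_upper (hb : HB G A) (x : Cn n) : ((A : ℂ) • 1 - G.g x).PosSemidef := by
  refine psd_of_re ((herm_smul_one _).sub (G.hermitian x)) fun v => ?_
  rw [Matrix.sub_mulVec, dotProduct_sub, quad_one, quad_eq, Complex.sub_re, Complex.ofReal_re]
  linarith [(hb x v).2]

lemma g_pos (hA : 1 < A) (hb : HB G A) (x : Cn n) : (G.g x).PosDef := by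
  have h1 : (((A⁻¹ : ℝ) : ℂ) • (1 : Matrix (Fin n) (Fin n) ℂ)).PosDef :=
    Matrix.PosDef.one.smul (by exact_mod_cast (by positivity : 0 < A⁻¹))
  have := h1.add_posSemidef (g_lower hb x)
  simpa using this

lemma det_pos' (hA : 1 < A) (hb : HB G A) (x : Cn n) : 0 < (G.g x).det := (g_pos hA hb x).det_pos

lemma det_unit (hA : 1 < A) (hb : HB G A) : IsUnit (Hm G).det := by
  have hs := SA_smooth (Hm G).det
  have hne : ∀ x, ((Hm G).det : Cn n → ℂ) x ≠ 0 := fun x => by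
    have := ev_det G x
    rw [ev_apply] at this
    rw [this]
    exact (det_pos' hA hb x).ne'
  refine IsUnit.of_mul_eq_one ⟨fun x => (((Hm G).det : Cn n → ℂ) x)⁻¹, hs.inv hne⟩ ?_
  apply Subtype.ext; funext x
  exact mul_inv_cancel₀ (hne x)

lemma log_smooth (hA : 1 < A) (hb : HB G A) :
    ContDiff ℝ ∞ (fun w => Complex.log ((G.g w).det)) := by
  have hs := SA_smooth (Hm G).det
  have e : ((Hm G).det : Cn n → ℂ) = fun w => (G.g w).det := funext fun x => ev_det G x
  rw [e] at hs
  rw [contDiff_iff_contDiffAt] at hs ⊢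
  intro x
  have hx : (G.g x).det ∈ Complex.slitPlane := by
    have := (Complex.lt_def.mp (det_pos' hA hb x)).1
    exact Or.inl (by simpa using this)
  have h1 : ContDiffAt ℝ ∞ Complex.log ((G.g x).det) :=
    (Complex.contDiffAt_log hx).restrict_scalars ℝ
  exact h1.comp x (hs x)

/-- The log determinant. -/
def lg (hA : 1 < A) (hb : HB G A) : SA n := ⟨fun w => Complex.log ((G.g w).det), log_smooth hA hb⟩

lemma Dv_lg (hA : 1 < A) (hb : HB G A) (v : Cn n) :
    Dv v (Hm G).det = (Hm G).det * Dv v (lg hA hb) := by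
  have e : ((Hm G).det : Cn n → ℂ) = fun w => (G.g w).det := funext fun x => ev_det G x
  have e2 : ((Hm G).det : Cn n → ℂ) = fun w => Complex.exp ((lg hA hb : Cn n → ℂ) w) := by
    rw [e]; funext w
    exact (Complex.exp_log (det_pos' hA hb w).ne').symm
  apply Subtype.ext; funext x
  rw [Dv_apply]
  have h := (SA_diff (lg hA hb) x).hasFDerivAt.cexp.fderiv
  conv_lhs => rw [e2]
  rw [h]
  change _ = ((Hm G).det : Cn n → ℂ) x * _
  conv_rhs => rw [e2]
  rfl

lemma dz_lg (hA : 1 < A) (hb : HB G A) (p : Fin n) :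
    dz p (Hm G).det = (Hm G).det * dz p (lg hA hb) := by
  rw [dz_eq, dz_eq, dzC_apply, dzC_apply, Dv_lg hA hb, Dv_lg hA hb]
  simp only [mul_smul_comm, mul_sub]

lemma tr_lg (hA : 1 < A) (hb : HB G A) (p : Fin n) :
    (dM (dz p) (Hm G) * (Hm G)⁻¹).trace = dz p (lg hA hb) := by
  have hu := det_unit hA hb
  have h1 := D_det (dz p) (Hm G)
  rw [dz_lg hA hb] at h1
  rw [Matrix.inv_def, Matrix.mul_smul, Matrix.trace_smul, ← h1, smul_eq_mul, ← mul_assoc,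
    Ring.inverse_mul_cancel _ hu, one_mul]

/-- The algebraic data attached to the metric. -/
def toKD (hA : 1 < A) (hb : HB G A) (hr : ∀ (x : Cn n) (i j : Fin n), G.Ric x i j = 0) :
    KD (Fin n) (SA n) where
  d := dz
  e := db
  star_d := dz_star
  de := dz_db
  dd := dz_dz
  H := Hm G
  P := (Hm G)⁻¹
  HP := Matrix.mul_nonsing_inv _ (det_unit hA hb)
  PH := Matrix.nonsing_inv_mul _ (det_unit hA hb)
  herm := by
    ext i j x
    exact congrFun (congrFun (G.hermitian x) i) j
  kah := fun i j k => by
    apply Subtype.ext; funext x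
    exact G.kahler x i j k
  ric := fun p q => by
    rw [tr_lg hA hb, ← dz_db]
    apply Subtype.ext; funext x
    exact neg_eq_zero.mp (hr x p q)

end BuildPart

section FinalPart

open scoped ComplexOrder ContDiff

variable {n : ℕ}

lemma ev_trace (x : Cn n) (M : Matrix (Fin n) (Fin n) (SA n)) :
    ev x M.trace = (M.map (ev x)).trace := by
  simp [Matrix.trace, map_sum]

lemma map_ct (x : Cn n) (M : Matrix (Fin n) (Fin n) (SA n)) :
    Mᴴ.map (ev x) = (M.map (ev x))ᴴ := rfl

lemma ev_BB (x : Cn n) (P H : Matrix (Fin n) (Fin n) (SA n))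
    (X Y : Fin n → Matrix (Fin n) (Fin n) (SA n)) :
    ev x (BB P H X Y) = BB (P.map (ev x)) (H.map (ev x)) (fun k => (X k).map (ev x))
      (fun k => (Y k).map (ev x)) := by
  simp only [BB, map_sum, map_mul, ev_trace, Matrix.map_mul, map_ct]
  rfl

/-- coordinates -/
def zeta (x0 : Cn n) (p : Fin n) : SA n :=
  ⟨fun z => z p - x0 p, by
    have : ContDiff ℝ ∞ (fun z : Cn n => z p - x0 p) := by fun_prop
    exact this⟩

lemma Dv_zeta (x0 v : Cn n) (p : Fin n) : Dv v (zeta x0 p) = algebraMap ℂ (SA n) (v p) := by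
  apply Subtype.ext; funext x
  rw [Dv_apply]
  have h : HasFDerivAt (fun z : Cn n => z p - x0 p)
      ((EuclideanSpace.proj (𝕜 := ℂ) p).restrictScalars ℝ : Cn n →L[ℝ] ℂ) x :=
    ((EuclideanSpace.proj (𝕜 := ℂ) p).restrictScalars ℝ : Cn n →L[ℝ] ℂ).hasFDerivAt.sub_const _
  change fderiv ℝ (fun z : Cn n => z p - x0 p) x v = v p
  rw [h.fderiv]; rfl

lemma dz_zeta (x0 : Cn n) (p q : Fin n) : dz q (zeta x0 p) = if q = p then 1 else 0 := by
  rw [dz_eq, dzC_apply, Dv_zeta, Dv_zeta]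
  apply Subtype.ext; funext x
  change (2⁻¹ : ℂ) * ((coordDir n q) p - Complex.I * (Complex.I * (coordDir n q) p)) = _
  rw [← mul_assoc, Complex.I_mul_I, coordDir]
  by_cases h : q = p
  · subst h; simp; norm_num
  · simp [h, Ne.symm h]

lemma db_zeta (x0 : Cn n) (p q : Fin n) : db q (zeta x0 p) = 0 := by
  rw [db_eq, dbC_apply, Dv_zeta, Dv_zeta]
  apply Subtype.ext; funext x
  change (2⁻¹ : ℂ) * ((coordDir n q) p + Complex.I * (Complex.I * (coordDir n q) p)) = 0
  rw [← mul_assoc, Complex.I_mul_I]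
  ring

lemma db_zs (x0 : Cn n) (p q : Fin n) : db q (star (zeta x0 p)) = if q = p then 1 else 0 := by
  rw [← dz_star, dz_zeta]; split_ifs <;> simp

lemma dz_zs (x0 : Cn n) (p q : Fin n) : dz q (star (zeta x0 p)) = 0 := by
  have := dz_star q (star (zeta x0 p))
  rw [star_star, db_zeta] at this
  exact star_eq_zero.mp this

/-- squared distance -/
def Nn (x0 : Cn n) : SA n := ∑ p, zeta x0 p * star (zeta x0 p)

lemma star_Nn (x0 : Cn n) : star (Nn x0) = Nn x0 := by
  simp [Nn, star_sum, mul_comm]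

lemma dz_Nn (x0 : Cn n) (q : Fin n) : dz q (Nn x0) = star (zeta x0 q) := by
  simp [Nn, map_sum, Derivation.leibniz, dz_zeta, dz_zs]

lemma db_Nn (x0 : Cn n) (q : Fin n) : db q (Nn x0) = zeta x0 q := by
  simp [Nn, map_sum, Derivation.leibniz, db_zeta, db_zs]

lemma ev_Nn (x0 x : Cn n) : ev x (Nn x0) = ((‖x - x0‖ ^ 2 : ℝ) : ℂ) := by
  rw [EuclideanSpace.norm_sq_eq, Nn, map_sum, Complex.ofReal_sum]
  refine Finset.sum_congr rfl fun p _ => ?_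
  rw [map_mul, ev_star]
  change (x p - x0 p) * (starRingEnd ℂ) (x p - x0 p) = _
  rw [Complex.mul_conj, Complex.normSq_eq_norm_sq]; simp

lemma L_smul (K : KD (Fin n) (SA n)) (hd : K.d = dz) (he : K.e = db) (c : ℂ) (f : SA n) :
    K.L (c • f) = c • K.L f := by
  simp only [KD.L, hd, he, Finset.smul_sum]
  refine Finset.sum_congr rfl fun p _ => Finset.sum_congr rfl fun q _ => ?_
  have : dz p (db q (c • f)) = c • dz p (db q f) := by
    rw [dz_eq, db_eq, dz_eq, db_eq, (dbC q).map_smul, (dzC p).map_smul]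
  rw [this, mul_smul_comm]

lemma L_add (K : KD (Fin n) (SA n)) (f g : SA n) : K.L (f + g) = K.L f + K.L g := by
  simp only [KD.L, map_add, mul_add, Finset.sum_add_distrib]

lemma L_Nn (K : KD (Fin n) (SA n)) (hd : K.d = dz) (he : K.e = db) (x0 : Cn n) :
    K.L (Nn x0) = K.P.trace := by
  simp only [KD.L, hd, he, db_Nn, dz_zeta, Matrix.trace]
  simp

lemma L_eta (K : KD (Fin n) (SA n)) (hd : K.d = dz) (he : K.e = db) (x0 : Cn n) (c : ℂ) :
    K.L (1 - c • Nn x0) = - (c • K.P.trace) := by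
  have h1 : K.L 1 = 0 := by simp [KD.L]
  have h : (1 : SA n) - c • Nn x0 = 1 + (-c) • Nn x0 := by rw [neg_smul, sub_eq_add_neg]
  rw [h, L_add, h1, L_smul K hd he, L_Nn K hd he, zero_add, neg_smul]

lemma const_of_dz {f : SA n} (h1 : ∀ p, dz p f = 0) (h2 : ∀ p, db p f = 0) (x y : Cn n) :
    ev x f = ev y f := by
  have hD : ∀ v : Cn n, Dv v f = 0 := fun v => by
    have hv : v = ∑ p, v p • coordDir n p := by
      ext i
      simp [coordDir, Pi.single_apply]
    have e1 := sum_coord (fun p => v p) f v hv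
    have e2 := sum_coord_bar (fun p => v p) f v hv
    simp only [h1, h2, smul_zero, Finset.sum_const_zero] at e1 e2
    have : Dv v f = (2⁻¹ : ℂ) • (Dv v f - Complex.I • Dv (Complex.I • v) f)
      + (2⁻¹ : ℂ) • (Dv v f + Complex.I • Dv (Complex.I • v) f) := by
      module
    rw [this, ← e1, ← e2, add_zero]
  refine is_const_of_fderiv_eq_zero (𝕜 := ℝ) (SA_diff f) (fun z => ?_) x y
  ext1 v
  have := congrArg (ev z) (hD v)
  rw [map_zero] at this
  exact this

end FinalPart

section EndPart

open scoped ComplexOrder ContDiff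

variable {n : ℕ} {G : KahlerMetricCn n} {A : ℝ}

lemma real_of_nonneg {z : ℂ} (h : 0 ≤ z) : ∃ r : ℝ, 0 ≤ r ∧ z = (r : ℂ) := by
  rw [Complex.le_def] at h
  exact ⟨z.re, h.1, Complex.ext rfl h.2.symm⟩

lemma KP_mul (hA : 1 < A) (hb : HB G A) (hr : ∀ (x : Cn n) (i j : Fin n), G.Ric x i j = 0)
    (x : Cn n) : G.g x * (toKD hA hb hr).P.map (ev x) = 1 := by
  have h := congrArg (fun M => M.map (ev x)) (toKD hA hb hr).HP
  simp only [Matrix.map_mul] at h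
  rw [← ev_Hm G x]
  refine Eq.trans h ?_
  exact Matrix.map_one _ (map_zero _) (map_one _)

lemma KP_herm (hA : 1 < A) (hb : HB G A) (hr : ∀ (x : Cn n) (i j : Fin n), G.Ric x i j = 0)
    (x : Cn n) : ((toKD hA hb hr).P.map (ev x))ᴴ = (toKD hA hb hr).P.map (ev x) := by
  rw [← map_ct, (toKD hA hb hr).hermP]

lemma KP_upper (hA : 1 < A) (hb : HB G A) (hr : ∀ (x : Cn n) (i j : Fin n), G.Ric x i j = 0)
    (x : Cn n) : ((A : ℂ) • 1 - (toKD hA hb hr).P.map (ev x)).PosSemidef := by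
  have := inv_upper (by positivity : 0 < A⁻¹) (KP_herm hA hb hr x) (KP_mul hA hb hr x)
    (g_lower hb x)
  rwa [inv_inv] at this

lemma KP_psd (hA : 1 < A) (hb : HB G A) (hr : ∀ (x : Cn n) (i j : Fin n), G.Ric x i j = 0)
    (x : Cn n) : ((toKD hA hb hr).P.map (ev x)).PosSemidef := by
  have h := (g_pos hA hb x).inv.posSemidef
  rwa [Matrix.inv_eq_right_inv (KP_mul hA hb hr x)] at h

lemma KP_lower (hA : 1 < A) (hb : HB G A) (hr : ∀ (x : Cn n) (i j : Fin n), G.Ric x i j = 0)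
    (x : Cn n) : ((toKD hA hb hr).P.map (ev x) - ((A⁻¹ : ℝ) : ℂ) • 1).PosSemidef := by
  exact inv_lower (by positivity : 0 < A) (G.hermitian x).eq (KP_mul hA hb hr x)
    (KP_psd hA hb hr x) (g_upper hb x)

lemma ev_S (hA : 1 < A) (hb : HB G A) (hr : ∀ (x : Cn n) (i j : Fin n), G.Ric x i j = 0)
    (x : Cn n) : ev x (toKD hA hb hr).S = qf ((toKD hA hb hr).P.map (ev x))
      ((toKD hA hb hr).P.map (ev x)) ((toKD hA hb hr).P.map (ev x))
      (fun p => (dM (dz p) (Hm G)).map (ev x)) := by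
  rw [KD.S_eq]
  simp only [qf, map_sum, map_mul, ev_trace, Matrix.map_mul, map_ct]
  rfl

lemma ev_LtrH (hA : 1 < A) (hb : HB G A) (hr : ∀ (x : Cn n) (i j : Fin n), G.Ric x i j = 0)
    (x : Cn n) : ev x ((toKD hA hb hr).L (Hm G).trace) = qf ((toKD hA hb hr).P.map (ev x))
      ((toKD hA hb hr).P.map (ev x)) 1
      (fun p => (dM (dz p) (Hm G)).map (ev x)) := by
  have h := (toKD hA hb hr).L_trH
  refine (congrArg (ev x) h).trans ?_
  simp only [qf, map_sum, map_mul, ev_trace, Matrix.map_mul, map_ct,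
    Matrix.map_one (ev x) (map_zero _) (map_one _)]
  rfl

lemma qf_smul3 (Q M : Matrix (Fin n) (Fin n) ℂ) (a : ℂ) (X : Fin n → Matrix (Fin n) (Fin n) ℂ) :
    qf Q M (a • 1) X = a * qf Q M 1 X := by
  simp only [qf, Finset.mul_sum, Matrix.mul_smul, Matrix.trace_smul, smul_eq_mul]
  exact Finset.sum_congr rfl fun p _ => Finset.sum_congr rfl fun q _ => by ring

lemma S_nonneg (hA : 1 < A) (hb : HB G A) (hr : ∀ (x : Cn n) (i j : Fin n), G.Ric x i j = 0)
    (x : Cn n) : 0 ≤ ev x (toKD hA hb hr).S := by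
  rw [ev_S]
  exact qf_nonneg (KP_psd hA hb hr x) (KP_psd hA hb hr x) (KP_psd hA hb hr x) _

lemma L_nonneg (hA : 1 < A) (hb : HB G A) (hr : ∀ (x : Cn n) (i j : Fin n), G.Ric x i j = 0)
    (x : Cn n) : 0 ≤ ev x ((toKD hA hb hr).L (Hm G).trace) := by
  rw [ev_LtrH]
  exact qf_nonneg (KP_psd hA hb hr x) (KP_psd hA hb hr x) Matrix.PosSemidef.one _

lemma S_le (hA : 1 < A) (hb : HB G A) (hr : ∀ (x : Cn n) (i j : Fin n), G.Ric x i j = 0)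
    (x : Cn n) : 0 ≤ (A : ℂ) * ev x ((toKD hA hb hr).L (Hm G).trace) - ev x (toKD hA hb hr).S := by
  rw [ev_LtrH, ev_S, ← qf_smul3, ← qf_sub3]
  exact qf_nonneg (KP_psd hA hb hr x) (KP_psd hA hb hr x) (KP_upper hA hb hr x) _

lemma tr_smul_one (a : ℂ) : ((a • (1 : Matrix (Fin n) (Fin n) ℂ))).trace = a * n := by
  rw [Matrix.trace_smul, Matrix.trace_one, smul_eq_mul, Fintype.card_fin]

lemma W_form (z : Fin n → ℂ) {Q : Matrix (Fin n) (Fin n) ℂ} (hQ : Q.PosSemidef) :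
    0 ≤ ∑ p, ∑ q, Q q p * (star (z p) * z q) := by
  refine psd_form hQ (fun p q => star (z p) * z q) fun c => ?_
  have : ∑ p, ∑ q, c p * star (c q) * (star (z p) * z q)
      = (∑ p, c p * star (z p)) * star (∑ p, c p * star (z p)) := by
    rw [star_sum, Finset.sum_mul_sum]
    refine Finset.sum_congr rfl fun p _ => Finset.sum_congr rfl fun q _ => ?_
    rw [star_mul', star_star]; ring
  rw [this]
  exact mul_star_self_nonneg _

lemma W_upper (x0 x : Cn n) {P : Matrix (Fin n) (Fin n) ℂ} (hP : ((A : ℂ) • 1 - P).PosSemidef) :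
    0 ≤ ((A * ‖x - x0‖ ^ 2 : ℝ) : ℂ) -
      ∑ p, ∑ q, P q p * (star (ev x (zeta x0 p)) * ev x (zeta x0 q)) := by
  have h := W_form (fun p => ev x (zeta x0 p)) hP
  refine h.trans_eq ?_
  simp only [Matrix.sub_apply, sub_mul, Finset.sum_sub_distrib, Matrix.smul_apply,
    Matrix.one_apply, smul_eq_mul]
  congr 1
  rw [Complex.ofReal_mul, ← ev_Nn, Nn, map_sum, Finset.mul_sum]
  refine Finset.sum_congr rfl fun p _ => ?_
  simp [ev_star, mul_comm]

/-- The barrier. -/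
def Ub (K : KD (Fin n) (SA n)) (x0 : Cn n) (c κ : ℝ) : SA n :=
  (1 - (c : ℂ) • Nn x0) * (1 - (c : ℂ) • Nn x0) * K.S + (κ : ℂ) • K.H.trace
    + ((c ^ 2 : ℝ) : ℂ) • Nn x0

lemma rsmul_star (c : ℝ) (f : SA n) : star ((c : ℂ) • f) = (c : ℂ) • star f := by
  rw [star_smul]; simp

lemma eta_star (x0 : Cn n) (c : ℝ) : star (1 - (c : ℂ) • Nn x0) = 1 - (c : ℂ) • Nn x0 := by
  rw [star_sub, rsmul_star, star_Nn, star_one]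

lemma trH_star (K : KD (Fin n) (SA n)) : star K.H.trace = K.H.trace := by
  rw [← Matrix.trace_conjTranspose, K.herm]

lemma Ub_star (K : KD (Fin n) (SA n)) (x0 : Cn n) (c κ : ℝ) : star (Ub K x0 c κ) = Ub K x0 c κ := by
  rw [Ub, star_add, star_add, rsmul_star, rsmul_star, star_Nn, trH_star, star_mul', star_mul',
    eta_star, KD.S, K.star_B]

lemma ev_eta (x0 x : Cn n) (c : ℝ) :
    ev x (1 - (c : ℂ) • Nn x0) = ((1 - c * ‖x - x0‖ ^ 2 : ℝ) : ℂ) := by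
  rw [map_sub, map_one, ev_smul, ev_Nn]; push_cast; rfl

lemma real_ineq {A m c r s l t w t1 t2 : ℝ} (hA0 : 0 < A) (hn' : 0 < m) (hc : 0 < c)
    (hr : 0 ≤ r) (hx : c * r ≤ 1) (hs0 : 0 ≤ s) (hl0 : 0 ≤ l) (hw0 : 0 ≤ w) (ht10 : 0 ≤ t1)
    (ht20 : 0 ≤ t2) (hwu : w ≤ A * r) (hSL : s ≤ A * l) (htu : t ≤ A * m) (htl : A⁻¹ * m ≤ t) :
    0 < t1 + t2 + s * (2 * (1 - c * r) * -(c * t) - 6 * (c ^ 2 * w))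
      + c * A * (2 * m * A + 6 * A) * l + c ^ 2 * t := by
  have htpos : 0 < t := by
    have : 0 < A⁻¹ * m := by positivity
    linarith
  have hη0 : 0 ≤ 1 - c * r := by linarith
  have hη1 : 1 - c * r ≤ 1 := by
    have : 0 ≤ c * r := by positivity
    linarith
  have i1 : (1 - c * r) * t ≤ A * m := by nlinarith
  have i2 : c * w ≤ A := by nlinarith
  have i3 : s * (2 * c * ((1 - c * r) * t) + 6 * c * (c * w))
      ≤ (A * l) * (2 * c * (A * m) + 6 * c * A) := by
    have : 0 ≤ (1 - c * r) * t := by positivity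
    gcongr
  have i4 : 0 < c ^ 2 * t := by positivity
  linarith

lemma ev_LUb (hA : 1 < A) (hb : HB G A) (hr : ∀ (x : Cn n) (i j : Fin n), G.Ric x i j = 0)
    (hn : 0 < n) (x0 x : Cn n) (c κ : ℝ) (hc : 0 < c) (hκ : κ = c * A * (2 * n * A + 6 * A))
    (hx : c * ‖x - x0‖ ^ 2 ≤ 1) : 0 < (ev x ((toKD hA hb hr).L (Ub (toKD hA hb hr) x0 c κ))).re := by
  have hS := S_nonneg hA hb hr x
  have hL := L_nonneg hA hb hr x
  have hSL := S_le hA hb hr x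
  have hP := KP_psd hA hb hr x
  have hPu := KP_upper hA hb hr x
  have hPl := KP_lower hA hb hr x
  have hH := (g_pos hA hb x).posSemidef
  have ht := hP.trace_nonneg
  have htu := hPu.trace_nonneg
  have htl := hPl.trace_nonneg
  rw [Matrix.trace_sub, tr_smul_one] at htu htl
  have hw := W_form (fun p => ev x (zeta x0 p)) hP
  have hwu := W_upper x0 x hPu
  have e0 : (toKD hA hb hr).H = Hm G := rfl
  have hd : (toKD hA hb hr).d = dz := rfl
  have he : (toKD hA hb hr).e = db := rfl
  have hcut := congrArg (ev x) ((toKD hA hb hr).cutoff (1 - (c : ℂ) • Nn x0) (eta_star x0 c))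
  set K := toKD hA hb hr with hK
  set η := (1 - (c : ℂ) • Nn x0) with hη
  have hT1 : 0 ≤ ev x (∑ p, ∑ q, K.P q p * K.B (K.X1 η p) (K.X1 η q)) := by
    simp only [map_sum, map_mul, KD.B, ev_BB]
    exact BB_psd hP hH hP (fun p k => (K.X1 η p k).map (ev x))
  have hT2 : 0 ≤ ev x (∑ p, ∑ q, K.P q p * K.B (K.X2 η q) (K.X2 η p)) := by
    simp only [map_sum, map_mul, KD.B, ev_BB]
    exact BB_psd' hP hH hP (fun p k => (K.X2 η p k).map (ev x))
  have hdη : ∀ p, K.d p η = (-(c : ℂ)) • star (zeta x0 p) := fun p => by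
    rw [hd, hη, map_sub, Derivation.map_one_eq_zero, zero_sub, neg_smul, ← dz_Nn, dz_eq, dz_eq,
      (dzC p).map_smul]
  have heη : ∀ p, K.e p η = (-(c : ℂ)) • zeta x0 p := fun p => by
    rw [he, hη, map_sub, Derivation.map_one_eq_zero, zero_sub, neg_smul, ← db_Nn, db_eq, db_eq,
      (dbC p).map_smul]
  have hW : ev x (∑ p, ∑ q, K.P q p * (K.d p η * K.e q η)) = (c : ℂ) ^ 2 *
      ∑ p, ∑ q, (K.P.map (ev x)) q p * (star (ev x (zeta x0 p)) * ev x (zeta x0 q)) := by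
    simp only [map_sum, map_mul, hdη, heη, ev_smul, ev_star, Finset.mul_sum, Matrix.map_apply]
    exact Finset.sum_congr rfl fun p _ => Finset.sum_congr rfl fun q _ => by ring
  have hLη : ev x (K.L η) = - ((c : ℂ) * (K.P.map (ev x)).trace) := by
    rw [hη, L_eta K hd he, map_neg, ev_smul, ev_trace]
  rw [Ub, L_add, L_add, map_add, map_add, hcut, L_smul K hd he, L_smul K hd he, L_Nn K hd he,
    ev_smul, ev_smul, ev_trace, map_add, map_add, map_mul, map_sub, map_mul, map_mul, map_mul, hW,
    hLη, ev_eta, e0]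
  rw [map_ofNat, map_ofNat]
  obtain ⟨s, hs0, hs⟩ := real_of_nonneg hS
  obtain ⟨l, hl0, hl⟩ := real_of_nonneg hL
  obtain ⟨t, ht0, ht⟩ := real_of_nonneg ht
  obtain ⟨w, hw0, hw⟩ := real_of_nonneg hw
  obtain ⟨t1, ht10, ht1⟩ := real_of_nonneg hT1
  obtain ⟨t2, ht20, ht2⟩ := real_of_nonneg hT2
  rw [hw] at hwu
  rw [hs, hl] at hSL
  rw [ht] at htu htl
  norm_cast at hwu hSL htu htl
  rw [hs, hl, ht, hw, ht1, ht2]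
  norm_cast
  rw [hκ]
  exact real_ineq (by linarith) (by exact_mod_cast hn) hc (sq_nonneg _) hx hs0 hl0 hw0 ht10 ht20
    (by linarith) (by linarith) (by linarith) (by linarith)

lemma S_bound (hA : 1 < A) (hb : HB G A) (hr : ∀ (x : Cn n) (i j : Fin n), G.Ric x i j = 0)
    (hn : 0 < n) (x0 : Cn n) (R c : ℝ) (hR : 0 < R) (hc : c * R ^ 2 = 1) :
    (ev x0 (toKD hA hb hr).S).re ≤ c * (A * (2 * n * A + 6 * A) * (A * n) + 1) := by
  have hA0 : 0 < A := by linarith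
  have hc0 : 0 < c := by
    by_contra h
    push Not at h
    nlinarith [sq_nonneg R]
  set κ := c * A * (2 * n * A + 6 * A) with hκ
  have hκ0 : 0 ≤ κ := by positivity
  set K := toKD hA hb hr with hK
  set U := Ub K x0 c κ with hU
  have hcont : Continuous (fun y => (ev y U).re) :=
    Complex.continuous_re.comp (SA_smooth U).continuous
  obtain ⟨x1, hx1, hmax⟩ := (isCompact_closedBall x0 R).exists_isMaxOn
    ⟨x0, Metric.mem_closedBall_self hR.le⟩ hcont.continuousOn
  have evU : ∀ y, (ev y U).re = (1 - c * ‖y - x0‖ ^ 2) ^ 2 * (ev y K.S).re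
      + κ * ((G.g y).trace).re + c ^ 2 * ‖y - x0‖ ^ 2 := fun y => by
    rw [hU, Ub, map_add, map_add, map_mul, map_mul, ev_eta, ev_smul, ev_smul, ev_Nn, ev_trace]
    rw [← Complex.ofReal_mul, ← Complex.ofReal_mul, Complex.add_re, Complex.add_re,
      Complex.re_ofReal_mul, Complex.re_ofReal_mul, Complex.ofReal_re, ← sq]
    rfl
  have htr0 : ∀ y, 0 ≤ ((G.g y).trace).re := fun y =>
    (Complex.le_def.mp (g_pos hA hb y).posSemidef.trace_nonneg).1
  have htr1 : ∀ y, ((G.g y).trace).re ≤ A * n := fun y => by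
    have := (g_upper hb y).trace_nonneg
    rw [Matrix.trace_sub, tr_smul_one] at this
    have := (Complex.le_def.mp this).1
    simp at this
    linarith
  have hx1' : ‖x1 - x0‖ = R := by
    rw [mem_closedBall_iff_norm] at hx1
    refine le_antisymm hx1 (not_lt.mp fun hlt => ?_)
    have hloc : IsLocalMax (fun y => (ev y U).re) x1 :=
      hmax.isLocalMax (Metric.closedBall_mem_nhds_of_mem (by rwa [mem_ball_iff_norm]))
    have h1 := lap_max_le U (Ub_star K x0 c κ) x1 hloc (KP_psd hA hb hr x1)
    have h2 := ev_LUb hA hb hr hn x0 x1 c κ hc0 hκ (by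
      rw [← hc]; gcongr)
    have h3 : ev x1 (K.L U) = ∑ p, ∑ q, (K.P.map (ev x1)) q p * ev x1 (dz p (db q U)) := by
      simp only [KD.L, map_sum, map_mul]; rfl
    rw [← hK, ← hU, h3] at h2
    have h4 := (Complex.le_def.mp h1).1
    rw [Complex.zero_re] at h4
    exact absurd h2 (not_lt.mpr h4)
  have hle : (ev x0 U).re ≤ (ev x1 U).re := hmax (Metric.mem_closedBall_self hR.le)
  rw [evU, evU, hx1', hc, sub_self, norm_zero] at hle
  have e1 := mul_nonneg hκ0 (htr0 x0)
  have e2 := mul_le_mul_of_nonneg_left (htr1 x1) hκ0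
  have e3 : c ^ 2 * R ^ 2 = c := by rw [sq c, mul_assoc, hc, mul_one]
  rw [e3] at hle
  rw [hκ] at e2
  rw [hκ] at hle e1
  nlinarith

lemma S_zero (hA : 1 < A) (hb : HB G A) (hr : ∀ (x : Cn n) (i j : Fin n), G.Ric x i j = 0)
    (hn : 0 < n) (x0 : Cn n) : ev x0 (toKD hA hb hr).S ≤ 0 := by
  have hS := S_nonneg hA hb hr x0
  have hA0 : 0 < A := by linarith
  have hre : (ev x0 (toKD hA hb hr).S).re ≤ 0 := by
    by_contra hs
    push Not at hs
    set s := (ev x0 (toKD hA hb hr).S).re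
    set D := A * (2 * n * A + 6 * A) * (A * n) + 1 with hD
    have hD0 : 0 < D := by positivity
    have h1 := S_bound hA hb hr hn x0 (Real.sqrt (2 * D / s)) (s / (2 * D)) (by positivity)
      (by rw [Real.sq_sqrt (by positivity)]; field_simp)
    have h2 : s / (2 * D) * D = s / 2 := by field_simp
    rw [← hD, h2] at h1
    linarith
  rw [Complex.le_def] at hS ⊢
  exact ⟨hre, hS.2.symm⟩

end EndPart

theorem liouville_ricci_flat_Cn {n : ℕ} (G : KahlerMetricCn n) (A : ℝ) (hA : 1 < A)
    (hbound : ∀ (x : Cn n) (v : Fin n → ℂ),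
      A⁻¹ * (∑ i, Complex.normSq (v i)) ≤ (∑ i, ∑ j, starRingEnd ℂ (v i) * G.g x i j * v j).re ∧
      (∑ i, ∑ j, starRingEnd ℂ (v i) * G.g x i j * v j).re ≤ A * (∑ i, Complex.normSq (v i)))
    (hricciflat : ∀ (x : Cn n) (i j : Fin n), G.Ric x i j = 0) :
    ∀ x y : Cn n, G.g x = G.g y := by
  intro x y
  rcases Nat.eq_zero_or_pos n with hn | hn
  · subst hn
    ext i; exact i.elim0
  have hb : HB G A := hbound
  have hA0 : 0 < A⁻¹ := by
    have : 0 < A := by linarith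
    positivity
  have hz : ∀ (p i j : Fin n), dz p (Hm G i j) = 0 := fun p i j => by
    apply Subtype.ext; funext z
    have h0 := S_zero hA hb hricciflat hn z
    rw [ev_S] at h0
    have := qf_zero hA0 (KP_psd hA hb hricciflat z) (KP_lower hA hb hricciflat z) _ h0 p
    exact congrFun (congrFun this i) j
  have hzb : ∀ (p i j : Fin n), db p (Hm G i j) = 0 := fun p i j => by
    have h := dz_star p (Hm G j i)
    rw [hz, star_zero] at h
    have e : star (Hm G j i) = Hm G i j :=
      congrFun (congrFun (toKD hA hb hricciflat).herm i) j
    rw [← e, ← h]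
  ext i j
  exact const_of_dz (fun p => hz p i j) (fun p => hzb p i j) x y
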